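/- arXiv:2010.14938 — 2 statements merged into one kernel-verified Lean document; each statement's English description precedes it below -/
import Mathlib

section
/- Let w ∈ L¹(ℝ) ∩ L²(ℝ) and let 𝓔 : ℝ → ℝ be twice continuously differentiable with 𝓔, 𝓔′, 𝓔″ bounded. Assume there exists a constant C > 0 such that ‖Rh‖_{L⁴(Ω_S)} ≤ C·‖h‖_{L²(Ω_D)} for all h ∈ L²(Ω_D). Then the operator F : L²(Ω_D) → L²(Ω_S) is Fréchet differentiable at every f ∈ L²(Ω_D), with derivative given by the bounded linear operator (F′(f)h)(s,θ) := ½·∫_ℝ w(r−s)·𝓔′(½·(Rf)(r,θ))·(Rh)(r,θ) dr; in particular, ‖F(f+h) − F(f) − F′(f)h‖_{L²(Ω_S)} ≤ ¼·‖w‖_{L²(ℝ)}·‖𝓔″‖_{L^∞(ℝ)}·C²·‖h‖²_{L²(Ω_D)} for all h ∈ L²(Ω_D). -/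
open MeasureTheory Real Set

/-- The Radon transform of `f : ℝ² → ℝ`:
`(Rf)(s,θ) = ∫_ℝ f(s·u(θ) + σ·u(θ)^⊥) dσ` with `u(θ) = (cos θ, sin θ)`,
`u(θ)^⊥ = (-sin θ, cos θ)`. -/
noncomputable def radonT (f : ℝ × ℝ → ℝ) (s θ : ℝ) : ℝ :=
  ∫ σ : ℝ, f (s * Real.cos θ - σ * Real.sin θ, s * Real.sin θ + σ * Real.cos θ)

/-- The closed unit disk `Ω_D ⊆ ℝ²`. -/
def unitDisk : Set (ℝ × ℝ) := {x : ℝ × ℝ | x.1 ^ 2 + x.2 ^ 2 ≤ 1}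

/-- The sinogram domain `Ω_S = [-1,1] × [0,2π)`. -/
def sinoDom : Set (ℝ × ℝ) := Icc (-1 : ℝ) 1 ×ˢ Ico (0 : ℝ) (2 * π)

/-- The forward operator `F(f)(s,θ) = ∫_ℝ w(r-s) · 𝓔(½ (Rf)(r,θ)) dr`. -/
noncomputable def Fop (w E : ℝ → ℝ) (f : ℝ × ℝ → ℝ) (s θ : ℝ) : ℝ :=
  ∫ r : ℝ, w (r - s) * E ((1 / 2) * radonT f r θ)

/-- The derivative operator
`(A(f)h)(s,θ) = ½ ∫_ℝ w(r-s) · 𝓔'(½ (Rf)(r,θ)) · (Rh)(r,θ) dr`. -/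
noncomputable def Aop (w E' : ℝ → ℝ) (f h : ℝ × ℝ → ℝ) (s θ : ℝ) : ℝ :=
  (1 / 2) * ∫ r : ℝ, w (r - s) * E' ((1 / 2) * radonT f r θ) * radonT h r θ


theorem rot_mp (θ : ℝ) : MeasurePreserving
    (fun q : ℝ × ℝ => (q.1 * Real.cos θ - q.2 * Real.sin θ, q.1 * Real.sin θ + q.2 * Real.cos θ)) volume volume := by
  refine ⟨by fun_prop, ?_⟩
  set L := Matrix.toLin (Module.Basis.finTwoProd ℝ) (Module.Basis.finTwoProd ℝ)
    !![Real.cos θ, -Real.sin θ; Real.sin θ, Real.cos θ] with hL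
  have hd : LinearMap.det L = 1 := by
    rw [hL, LinearMap.det_toLin, Matrix.det_fin_two_of]
    nlinarith [Real.sin_sq_add_cos_sq θ]
  have := Measure.map_linearMap_addHaar_eq_smul_addHaar (volume : Measure (ℝ × ℝ)) (f := L) (by rw [hd]; exact one_ne_zero)
  rw [hd] at this
  simp only [inv_one, abs_one, ENNReal.ofReal_one, one_smul] at this
  convert this using 2
  ext q <;> simp [hL, Matrix.toLin_finTwoProd_apply] <;> ring

theorem rot_qmp : Measure.QuasiMeasurePreserving (fun q : (ℝ × ℝ) × ℝ =>
    (q.1.1 * Real.cos q.1.2 - q.2 * Real.sin q.1.2, q.1.1 * Real.sin q.1.2 + q.2 * Real.cos q.1.2)) volume volume := by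
  have h1 : Measure.QuasiMeasurePreserving (fun q : ℝ × (ℝ × ℝ) =>
    (q.2.1 * Real.cos q.1 - q.2.2 * Real.sin q.1, q.2.1 * Real.sin q.1 + q.2.2 * Real.cos q.1)) volume volume := by
    have hm : Measurable (fun q : ℝ × (ℝ × ℝ) =>
    (q.2.1 * Real.cos q.1 - q.2.2 * Real.sin q.1, q.2.1 * Real.sin q.1 + q.2.2 * Real.cos q.1)) := by fun_prop
    refine ⟨hm, Measure.AbsolutelyContinuous.mk fun N hN h0 => ?_⟩
    rw [Measure.map_apply hm hN]
    refine (Measure.measure_prod_null (hm hN)).2 (Filter.Eventually.of_forall fun θ => ?_)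
    have := (rot_mp θ).measure_preimage hN.nullMeasurableSet
    rw [h0] at this
    exact this
  have h2 : MeasurePreserving (fun q : (ℝ × ℝ) × ℝ => (q.1.2, (q.1.1, q.2))) volume volume := 
    (measurePreserving_prodAssoc (volume : Measure ℝ) (volume : Measure ℝ) (volume : Measure ℝ)).comp
      ((Measure.measurePreserving_swap (μ := (volume : Measure ℝ)) (ν := (volume : Measure ℝ))).prod (MeasurePreserving.id (volume : Measure ℝ)))
  exact h1.comp h2.quasiMeasurePreserving

theorem radon_aesm (f : ℝ × ℝ → ℝ) (hf : AEStronglyMeasurable f volume) :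
    AEStronglyMeasurable (fun p : ℝ × ℝ => radonT f p.1 p.2) volume := by
  have := hf.comp_quasiMeasurePreserving rot_qmp
  exact AEStronglyMeasurable.integral_prod_right' (μ := (volume : Measure (ℝ × ℝ))) (ν := (volume : Measure ℝ)) this

theorem disk_integrable (h : ℝ × ℝ → ℝ) (hh : MemLp h 2 volume) (hs : Function.support h ⊆ unitDisk) :
    Integrable h := by
  have hsub : unitDisk ⊆ Icc (-1:ℝ) 1 ×ˢ Icc (-1:ℝ) 1 := by
    rintro ⟨x, y⟩ h
    simp only [unitDisk, mem_ofPred_eq] at h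
    refine ⟨abs_le.1 ?_, abs_le.1 ?_⟩ <;> apply abs_le_one_iff_mul_self_le_one.2 <;> nlinarith [sq_nonneg x, sq_nonneg y]
  have hfin : (volume : Measure (ℝ × ℝ)) (Icc (-1:ℝ) 1 ×ˢ Icc (-1:ℝ) 1) < ⊤ := 
    (isCompact_Icc.prod isCompact_Icc).measure_lt_top
  rw [← integrableOn_iff_integrable_of_support_subset (hs.trans hsub)]
  have : IsFiniteMeasure (volume.restrict (Icc (-1:ℝ) 1 ×ˢ Icc (-1:ℝ) 1) : Measure (ℝ × ℝ)) := ⟨by simpa using hfin⟩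
  exact (hh.restrict _).integrable (by norm_num)

theorem radon_add (f h : ℝ × ℝ → ℝ) (hf : Integrable f) (hh : Integrable h) (θ : ℝ) :
    ∀ᵐ r : ℝ, radonT (f + h) r θ = radonT f r θ + radonT h r θ := by
  have h1 := Integrable.prod_right_ae (((rot_mp θ).integrable_comp hf.aestronglyMeasurable).2 hf)
  have h2 := Integrable.prod_right_ae (((rot_mp θ).integrable_comp hh.aestronglyMeasurable).2 hh)
  filter_upwards [h1, h2] with r a b
  exact integral_add a b

theorem radon_zero (h : ℝ × ℝ → ℝ) (hs : Function.support h ⊆ unitDisk) (θ r : ℝ) (hr : r ∉ Icc (-1:ℝ) 1) :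
    radonT h r θ = 0 := by
  unfold radonT
  refine integral_eq_zero_of_ae (Filter.Eventually.of_forall fun σ => ?_)
  by_contra hne
  have := hs hne
  simp only [unitDisk, mem_ofPred_eq] at this
  apply hr
  refine abs_le.1 (abs_le_one_iff_mul_self_le_one.2 ?_)
  nlinarith [Real.sin_sq_add_cos_sq θ, sq_nonneg σ]

theorem taylor2 (E : ℝ → ℝ) (hE : ContDiff ℝ 2 E) (K : ℝ) (hK : ∀ x, |deriv (deriv E) x| ≤ K) (a b : ℝ) :
    |E (a + b) - E a - deriv E a * b| ≤ K / 2 * b ^ 2 := by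
  have hE1 : ContDiff ℝ 1 (deriv E) := ((contDiff_succ_iff_deriv (n := 1)).1 hE).2.2
  have hlip : ∀ x y, |deriv E y - deriv E x| ≤ K * |y - x| := fun x y =>
    Convex.norm_image_sub_le_of_norm_deriv_le (f := deriv E) (s := univ)
      (fun x _ => (hE1.differentiable (by norm_num)).differentiableAt) (fun x _ => hK x) convex_univ (mem_univ _) (mem_univ _)
  have hd : ∀ t : ℝ, HasDerivAt (fun t => E (a + t * b) - E a - deriv E a * (t * b)) ((deriv E (a + t * b) - deriv E a) * b) t := by
    intro t
    have h1 : HasDerivAt (fun t : ℝ => t * b) b t := by simpa using (hasDerivAt_id t).mul_const b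
    have h2 : HasDerivAt E (deriv E (a + t * b)) (a + t * b) := (hE.differentiable (by norm_num)).differentiableAt.hasDerivAt
    have h3 := h2.comp t (h1.const_add a)
    exact ((h3.sub_const (E a)).sub (h1.const_mul (deriv E a))).congr_deriv (by ring)
  have := image_norm_le_of_norm_deriv_right_le_deriv_boundary (a := 0) (b := 1)
    (f := fun t => E (a + t * b) - E a - deriv E a * (t * b)) (f' := fun t => (deriv E (a + t * b) - deriv E a) * b)
    (B := fun t => K / 2 * b ^ 2 * t ^ 2) (B' := fun t => K * b ^ 2 * t)
    (fun t _ => (hd t).continuousAt.continuousWithinAt) (fun t _ => (hd t).hasDerivWithinAt)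
    (by simp) (fun t => by
      exact ((hasDerivAt_pow 2 t).const_mul (K / 2 * b ^ 2)).congr_deriv (by push_cast; ring)) (fun t ht => by
      have := hlip a (a + t * b)
      rw [Real.norm_eq_abs, abs_mul]
      have h0 : |a + t * b - a| = t * |b| := by rw [add_sub_cancel_left, abs_mul, abs_of_nonneg ht.1]
      rw [h0] at this
      calc _ ≤ K * (t * |b|) * |b| := by gcongr
        _ = K * (|b| ^ 2) * t := by ring
        _ = _ := by rw [sq_abs]) (right_mem_Icc.2 zero_le_one)
  simpa using this

theorem sq_lint {α : Type*} [MeasurableSpace α] (μ : Measure α) (F : α → ENNReal) (hF : AEMeasurable F μ) :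
    (∫⁻ x, F x ∂μ) ^ 2 ≤ μ univ * ∫⁻ x, F x ^ 2 ∂μ := by
  have := ENNReal.lintegral_mul_le_Lp_mul_Lq μ Real.HolderConjugate.two_two (f := fun _ => 1) (g := F) aemeasurable_const hF
  simp only [Pi.mul_apply, one_mul, ENNReal.rpow_two, one_pow, lintegral_const] at this
  have hh : ∀ x : ENNReal, (x ^ (1 / 2 : ℝ)) ^ 2 = x := fun x => by
    rw [← ENNReal.rpow_natCast, ← ENNReal.rpow_mul]; norm_num
  calc _ ≤ _ := pow_le_pow_left' this 2
    _ = _ := by rw [mul_pow, hh, hh]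

theorem sup_bd (g : ℝ → ℝ) (hg : Continuous g) (M : ℝ) (hM : ∀ x, |g x| ≤ M) :
    eLpNorm g ⊤ volume ≠ ⊤ ∧ ∀ x, |g x| ≤ (eLpNorm g ⊤ volume).toReal := by
  have hfin : eLpNorm g ⊤ volume ≠ ⊤ := (memLp_top_of_bound hg.aestronglyMeasurable M (Filter.Eventually.of_forall hM)).eLpNorm_ne_top
  refine ⟨hfin, fun x => ?_⟩
  have hae : ∀ᵐ x, |g x| ≤ (eLpNorm g ⊤ volume).toReal := by
    filter_upwards [ae_le_eLpNormEssSup (f := g) (μ := volume)] with x hx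
    rw [← eLpNorm_exponent_top] at hx
    simpa using ENNReal.toReal_mono hfin hx
  have := (Measure.dense_of_ae hae).closure_eq
  rw [(isClosed_le hg.abs continuous_const).closure_eq] at this
  have hx : x ∈ {b | |g b| ≤ (eLpNorm g ⊤ volume).toReal} := by rw [this]; exact mem_univ x
  exact hx

theorem eLpNorm_two_sq {α : Type*} [MeasurableSpace α] (μ : Measure α) (g : α → ℝ) :
    eLpNorm g 2 μ ^ 2 = ∫⁻ x, ‖g x‖ₑ ^ 2 ∂μ := by
  have := eLpNorm_nnreal_pow_eq_lintegral (μ := μ) (f := g) (p := 2) (by norm_num)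
  simpa using this

theorem ker_aesm (w : ℝ → ℝ) (hw : AEStronglyMeasurable w volume) (I ν : Measure ℝ) [SFinite I] [SFinite ν]
    (hI : I ≪ volume) (G : ℝ × ℝ → ℝ) (hG : AEStronglyMeasurable G (I.prod ν)) :
    AEStronglyMeasurable (fun q : (ℝ × ℝ) × ℝ => w (q.2 - q.1.1)) ((I.prod ν).prod I) ∧
    AEStronglyMeasurable (fun q : (ℝ × ℝ) × ℝ => G (q.2, q.1.2)) ((I.prod ν).prod I) := by
  have hq1 : Measure.QuasiMeasurePreserving (fun q : (ℝ × ℝ) × ℝ => (q.2, q.1.1)) ((I.prod ν).prod I) (I.prod I) :=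
    (Measure.measurePreserving_swap (μ := I) (ν := I)).quasiMeasurePreserving.comp
      (QuasiMeasurePreserving.prodMap (Measure.quasiMeasurePreserving_fst (μ := I) (ν := ν)) (Measure.QuasiMeasurePreserving.id I))
  have hq2 : Measure.QuasiMeasurePreserving (fun q : (ℝ × ℝ) × ℝ => (q.2, q.1.2)) ((I.prod ν).prod I) (I.prod ν) :=
    (Measure.measurePreserving_swap (μ := ν) (ν := I)).quasiMeasurePreserving.comp
      (QuasiMeasurePreserving.prodMap (Measure.quasiMeasurePreserving_snd (μ := I) (ν := ν)) (Measure.QuasiMeasurePreserving.id I))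
  have hs : Measure.QuasiMeasurePreserving (fun p : ℝ × ℝ => p.1 - p.2) (I.prod I) volume :=
    (quasiMeasurePreserving_sub (volume : Measure ℝ) volume).mono_left (hI.prod hI)
  exact ⟨hw.comp_quasiMeasurePreserving (hs.comp hq1), hG.comp_quasiMeasurePreserving hq2⟩

theorem T_bound (w : ℝ → ℝ) (hw : MemLp w 2 volume) (ν : Measure ℝ) [SFinite ν] (G : ℝ × ℝ → ℝ)
    (hG : AEStronglyMeasurable G ((volume.restrict (Icc (-1:ℝ) 1)).prod ν))
    (h0 : ∀ r θ, r ∉ Icc (-1:ℝ) 1 → G (r, θ) = 0) :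
    AEStronglyMeasurable (fun p : ℝ × ℝ => ∫ r, w (r - p.1) * G (r, p.2)) ((volume.restrict (Icc (-1:ℝ) 1)).prod ν) ∧
    eLpNorm (fun p : ℝ × ℝ => ∫ r, w (r - p.1) * G (r, p.2)) 2 ((volume.restrict (Icc (-1:ℝ) 1)).prod ν) ^ 2 ≤
      2 * eLpNorm w 2 volume ^ 2 * eLpNorm G 2 ((volume.restrict (Icc (-1:ℝ) 1)).prod ν) ^ 2 := by
  have hT : (fun p : ℝ × ℝ => ∫ r, w (r - p.1) * G (r, p.2)) = 
      (fun p : ℝ × ℝ => ∫ r in Icc (-1:ℝ) 1, w (r - p.1) * G (r, p.2)) := by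
    funext p
    exact (setIntegral_eq_integral_of_forall_compl_eq_zero (fun r hr => by rw [h0 r p.2 hr, mul_zero])).symm
  rw [hT]
  have hIu : (volume.restrict (Icc (-1:ℝ) 1)) univ = 2 := by
    rw [Measure.restrict_apply_univ, Real.volume_Icc]; norm_num
  have hI : volume.restrict (Icc (-1:ℝ) 1) ≪ volume := Measure.absolutelyContinuous_of_le Measure.restrict_le_self
  have hI2 : volume.restrict (Icc (-1:ℝ) 1) ≤ volume := Measure.restrict_le_self
  generalize volume.restrict (Icc (-1:ℝ) 1) = I at *
  have : IsFiniteMeasure I := ⟨by rw [hIu]; norm_num⟩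
  obtain ⟨k1, k2⟩ := ker_aesm w hw.aestronglyMeasurable I ν hI G hG
  refine ⟨(k1.mul k2).integral_prod_right', ?_⟩
  rw [eLpNorm_two_sq, eLpNorm_two_sq, eLpNorm_two_sq]
  have hsec : ∀ᵐ p ∂(I.prod ν), AEStronglyMeasurable (fun r => G (r, p.2)) I :=
    Measure.quasiMeasurePreserving_snd.ae hG.prodMk_right
  have hws : ∀ s : ℝ, AEStronglyMeasurable (fun r => w (r - s)) volume := fun s =>
    hw.aestronglyMeasurable.comp_measurePreserving (measurePreserving_sub_right volume s)
  have hws' : ∀ s : ℝ, AEStronglyMeasurable (fun r => w (s - r)) volume := fun s =>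
    hw.aestronglyMeasurable.comp_measurePreserving (Measure.measurePreserving_sub_left volume s)
  have hm : AEMeasurable (fun q : (ℝ × ℝ) × ℝ => ‖w (q.2 - q.1.1)‖ₑ ^ 2 * ‖G (q.2, q.1.2)‖ₑ ^ 2) ((I.prod ν).prod I) :=
    (k1.enorm.pow_const 2).mul (k2.enorm.pow_const 2)
  calc ∫⁻ p, ‖∫ r, w (r - p.1) * G (r, p.2) ∂I‖ₑ ^ 2 ∂(I.prod ν)
      ≤ ∫⁻ p, 2 * ∫⁻ r, ‖w (r - p.1)‖ₑ ^ 2 * ‖G (r, p.2)‖ₑ ^ 2 ∂I ∂(I.prod ν) := by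
        refine lintegral_mono_ae ?_
        filter_upwards [hsec] with p hp
        calc _ ≤ (∫⁻ r, ‖w (r - p.1) * G (r, p.2)‖ₑ ∂I) ^ 2 := 
              pow_le_pow_left' (enorm_integral_le_lintegral_enorm _) 2
          _ ≤ _ := sq_lint I _ (((hws p.1).mono_measure hI2).mul hp).enorm
          _ = _ := by simp only [hIu, enorm_mul, mul_pow]
    _ = 2 * ∫⁻ p, ∫⁻ r, ‖w (r - p.1)‖ₑ ^ 2 * ‖G (r, p.2)‖ₑ ^ 2 ∂I ∂(I.prod ν) := 
        lintegral_const_mul' _ _ (by norm_num)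
    _ = 2 * ∫⁻ r, ∫⁻ p, ‖w (r - p.1)‖ₑ ^ 2 * ‖G (r, p.2)‖ₑ ^ 2 ∂(I.prod ν) ∂I := by
        rw [lintegral_lintegral_swap hm]
    _ ≤ 2 * ∫⁻ r, (∫⁻ s, ‖w s‖ₑ ^ 2) * ∫⁻ θ, ‖G (r, θ)‖ₑ ^ 2 ∂ν ∂I := by
        gcongr 2 * ?_
        refine lintegral_mono_ae ?_
        filter_upwards [hG.prodMk_left] with r hr
        rw [lintegral_prod_mul (((hws' r).mono_measure hI2).enorm.pow_const 2) (hr.enorm.pow_const 2)]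
        gcongr ?_ * _
        calc _ ≤ ∫⁻ s, ‖w (r - s)‖ₑ ^ 2 := lintegral_mono' hI2 le_rfl
          _ = _ := lintegral_sub_left_eq_self (fun s => ‖w s‖ₑ ^ 2) r
    _ = 2 * ((∫⁻ s, ‖w s‖ₑ ^ 2) * ∫⁻ r, ∫⁻ θ, ‖G (r, θ)‖ₑ ^ 2 ∂ν ∂I) := by
        rw [lintegral_const_mul' _ _ (by
          rw [← eLpNorm_two_sq]; exact ENNReal.pow_ne_top hw.eLpNorm_ne_top)]
    _ = _ := by
        rw [← lintegral_prod _ (hG.enorm.pow_const 2), mul_assoc]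

theorem sec_int (w : ℝ → ℝ) (hw : MemLp w 2 volume) (ν : Measure ℝ) [SFinite ν] (G : ℝ × ℝ → ℝ)
    (hG : MemLp G 2 ((volume.restrict (Icc (-1:ℝ) 1)).prod ν))
    (h0 : ∀ r θ, r ∉ Icc (-1:ℝ) 1 → G (r, θ) = 0) :
    ∀ᵐ θ ∂ν, ∀ s, Integrable (fun r => w (r - s) * G (r, θ)) := by
  filter_upwards [hG.aestronglyMeasurable.prodMk_right, hG.integrable_sq.prod_left_ae] with θ h1 h2 s
  have hg : MemLp (fun r => G (r, θ)) 2 (volume.restrict (Icc (-1:ℝ) 1)) := (memLp_two_iff_integrable_sq h1).2 h2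
  have hw' : MemLp (fun r => w (r - s)) 2 volume := hw.comp_measurePreserving (measurePreserving_sub_right volume s)
  have := MemLp.integrable_mul (hw'.restrict (Icc (-1:ℝ) 1)) hg
  refine (integrableOn_iff_integrable_of_support_subset (s := Icc (-1:ℝ) 1) ?_).1 this
  intro r hr
  by_contra hn
  exact hr (by simp [h0 r θ hn])

theorem radon_add_prod (f h : ℝ × ℝ → ℝ) (hf : Integrable f) (hh : Integrable h) :
    ∀ᵐ p : ℝ × ℝ, radonT (f + h) p.1 p.2 = radonT f p.1 p.2 + radonT h p.1 p.2 := by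
  have hm := ((radon_aesm _ (hf.add hh).aestronglyMeasurable).sub
    ((radon_aesm _ hf.aestronglyMeasurable).add (radon_aesm _ hh.aestronglyMeasurable))).enorm
  have h0 := lintegral_prod_symm (μ := (volume : Measure ℝ)) (ν := (volume : Measure ℝ)) _ hm
  have h1 : ∀ θ : ℝ, ∫⁻ r : ℝ, ‖radonT (f + h) r θ - (radonT f r θ + radonT h r θ)‖ₑ = 0 := by
    intro θ
    rw [lintegral_congr_ae (g := fun _ => 0), lintegral_zero]
    filter_upwards [radon_add f h hf hh θ] with r hr
    simp [hr]
  have h2 : ∫⁻ p : ℝ × ℝ, ‖radonT (f + h) p.1 p.2 - (radonT f p.1 p.2 + radonT h p.1 p.2)‖ₑ = 0 := by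
    refine h0.trans ?_
    refine (lintegral_congr (g := fun _ => 0) fun θ => h1 θ).trans lintegral_zero
  have h3 := (lintegral_eq_zero_iff' hm).1 h2
  filter_upwards [h3] with p hp
  have : radonT (f + h) p.1 p.2 - (radonT f p.1 p.2 + radonT h p.1 p.2) = 0 := by simpa using hp
  linarith

/-- Let `w ∈ L¹(ℝ) ∩ L²(ℝ)` and let `𝓔` be twice continuously
differentiable with `𝓔, 𝓔', 𝓔''` bounded. Assume there is `C > 0` with
`‖Rh‖_{L⁴(Ω_S)} ≤ C·‖h‖_{L²(Ω_D)}` for all `h ∈ L²(Ω_D)`. Then `F` is Fréchet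
differentiable at every `f ∈ L²(Ω_D)` with derivative the bounded linear operator
`(F'(f)h)(s,θ) = ½ ∫_ℝ w(r−s)·𝓔'(½(Rf)(r,θ))·(Rh)(r,θ) dr`, expressed here by:
`A(f)h ∈ L²(Ω_S)` for all `h`, `h ↦ A(f)h` is linear (a.e. on `Ω_S`) and bounded,
and the first-order Taylor remainder obeys
`‖F(f+h) − F(f) − A(f)h‖_{L²(Ω_S)} ≤ ¼·‖w‖_{L²}·‖𝓔''‖_{L^∞}·C²·‖h‖²_{L²(Ω_D)}`. -/
theorem F_frechet_differentiable (w 𝓔 : ℝ → ℝ)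
    (hw1 : Integrable w) (hw2 : MemLp w 2 volume)
    (h𝓔 : ContDiff ℝ 2 𝓔)
    (h𝓔b : ∃ M : ℝ, ∀ x : ℝ, |𝓔 x| ≤ M ∧ |deriv 𝓔 x| ≤ M ∧ |deriv (deriv 𝓔) x| ≤ M)
    (C : ℝ) (hC : 0 < C)
    (hRC : ∀ h : ℝ × ℝ → ℝ, MemLp h 2 volume → Function.support h ⊆ unitDisk →
      eLpNorm (fun p : ℝ × ℝ => radonT h p.1 p.2) 4 (volume.restrict sinoDom) ≤
        ENNReal.ofReal C * eLpNorm h 2 volume) :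
    ∀ f : ℝ × ℝ → ℝ, MemLp f 2 volume → Function.support f ⊆ unitDisk →
      -- `A(f)` maps `L²(Ω_D)` into `L²(Ω_S)` ...
      (∀ h : ℝ × ℝ → ℝ, MemLp h 2 volume → Function.support h ⊆ unitDisk →
        MemLp (fun p : ℝ × ℝ => Aop w (deriv 𝓔) f h p.1 p.2) 2 (volume.restrict sinoDom)) ∧
      -- ... is linear in `h` (a.e. on `Ω_S`) ...
      (∀ h₁ h₂ : ℝ × ℝ → ℝ, MemLp h₁ 2 volume → Function.support h₁ ⊆ unitDisk →
        MemLp h₂ 2 volume → Function.support h₂ ⊆ unitDisk →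
        ∀ᵐ p : ℝ × ℝ ∂(volume.restrict sinoDom),
          Aop w (deriv 𝓔) f (h₁ + h₂) p.1 p.2 =
            Aop w (deriv 𝓔) f h₁ p.1 p.2 + Aop w (deriv 𝓔) f h₂ p.1 p.2) ∧
      (∀ (c : ℝ) (h : ℝ × ℝ → ℝ), MemLp h 2 volume → Function.support h ⊆ unitDisk →
        ∀ᵐ p : ℝ × ℝ ∂(volume.restrict sinoDom),
          Aop w (deriv 𝓔) f (c • h) p.1 p.2 = c * Aop w (deriv 𝓔) f h p.1 p.2) ∧
      -- ... and is bounded ...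
      (∃ C' : ℝ, 0 ≤ C' ∧
        ∀ h : ℝ × ℝ → ℝ, MemLp h 2 volume → Function.support h ⊆ unitDisk →
          eLpNorm (fun p : ℝ × ℝ => Aop w (deriv 𝓔) f h p.1 p.2) 2
              (volume.restrict sinoDom) ≤
            ENNReal.ofReal C' * eLpNorm h 2 volume) ∧
      -- ... with quadratic first-order Taylor remainder (Fréchet differentiability):
      (∀ h : ℝ × ℝ → ℝ, MemLp h 2 volume → Function.support h ⊆ unitDisk →
        eLpNorm
            (fun p : ℝ × ℝ =>
              Fop w 𝓔 (f + h) p.1 p.2 - Fop w 𝓔 f p.1 p.2 -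
                Aop w (deriv 𝓔) f h p.1 p.2) 2 (volume.restrict sinoDom) ≤
          ENNReal.ofReal (1 / 4) * eLpNorm w 2 volume *
            eLpNorm (deriv (deriv 𝓔)) ⊤ volume * ENNReal.ofReal C ^ 2 *
            eLpNorm h 2 volume ^ 2) := by
  obtain ⟨M, hM⟩ := h𝓔b
  have hM0 : 0 ≤ M := (abs_nonneg _).trans (hM 0).1
  have hE1 : ContDiff ℝ 1 (deriv 𝓔) := ((contDiff_succ_iff_deriv (n := 1)).1 h𝓔).2.2
  have hE2 : Continuous (deriv (deriv 𝓔)) := hE1.continuous_deriv le_rfl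
  have hEc : Continuous 𝓔 := h𝓔.continuous
  have hE1c : Continuous (deriv 𝓔) := hE1.continuous
  obtain ⟨hKfin, hK⟩ := sup_bd _ hE2 M (fun x => (hM x).2.2)
  have hΩ : (volume.restrict sinoDom : Measure (ℝ × ℝ)) =
      (volume.restrict (Icc (-1:ℝ) 1)).prod (volume.restrict (Ico (0:ℝ) (2 * π))) :=
    (Measure.prod_restrict _ _).symm
  rw [hΩ] at hRC ⊢
  set ν : Measure ℝ := volume.restrict (Ico (0:ℝ) (2 * π)) with hν
  set μ : Measure (ℝ × ℝ) := (volume.restrict (Icc (-1:ℝ) 1)).prod ν with hμ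
  have hμv : μ ≤ volume := hΩ ▸ Measure.restrict_le_self
  have hvν : (volume : Measure ℝ).prod ν ≪ volume :=
    Measure.AbsolutelyContinuous.rfl.prod (Measure.absolutelyContinuous_of_le Measure.restrict_le_self)
  have : IsFiniteMeasure μ := inferInstance
  have hR4 : ∀ h : ℝ × ℝ → ℝ, MemLp h 2 volume → Function.support h ⊆ unitDisk →
      MemLp (fun p : ℝ × ℝ => radonT h p.1 p.2) 4 μ := fun h hh hs =>
    ⟨(radon_aesm h hh.aestronglyMeasurable).mono_measure hμv,
      (hRC h hh hs).trans_lt (ENNReal.mul_lt_top ENNReal.ofReal_lt_top hh.eLpNorm_lt_top)⟩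
  intro f hf hfs
  have hfR := radon_aesm f hf.aestronglyMeasurable
  have hG1m : ∀ h : ℝ × ℝ → ℝ, MemLp h 2 volume →
      AEStronglyMeasurable (fun p : ℝ × ℝ => deriv 𝓔 ((1 / 2) * radonT f p.1 p.2) * radonT h p.1 p.2) volume :=
    fun h hh => (hE1c.comp_aestronglyMeasurable (hfR.const_mul (1 / 2))).mul
      (radon_aesm h hh.aestronglyMeasurable)
  have hG1b : ∀ h : ℝ × ℝ → ℝ, ∀ p : ℝ × ℝ,
      ‖deriv 𝓔 ((1 / 2) * radonT f p.1 p.2) * radonT h p.1 p.2‖ ≤ M * ‖radonT h p.1 p.2‖ := by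
    intro h p
    rw [norm_mul]
    gcongr
    exact (hM _).2.1
  have hG1 : ∀ h : ℝ × ℝ → ℝ, MemLp h 2 volume → Function.support h ⊆ unitDisk →
      MemLp (fun p : ℝ × ℝ => deriv 𝓔 ((1 / 2) * radonT f p.1 p.2) * radonT h p.1 p.2) 2 μ :=
    fun h hh hs => ((hR4 h hh hs).mono_exponent (by norm_num)).of_le_mul
      ((hG1m h hh).mono_measure hμv) (Filter.Eventually.of_forall (hG1b h))
  have hG10 : ∀ h : ℝ × ℝ → ℝ, Function.support h ⊆ unitDisk → ∀ r θ, r ∉ Icc (-1:ℝ) 1 →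
      (fun p : ℝ × ℝ => deriv 𝓔 ((1 / 2) * radonT f p.1 p.2) * radonT h p.1 p.2) (r, θ) = 0 := by
    intro h hs r θ hr
    simp [radon_zero h hs θ r hr]
  have hA : ∀ h : ℝ × ℝ → ℝ, ∀ s θ, Aop w (deriv 𝓔) f h s θ =
      (1 / 2) * ∫ r : ℝ, w (r - s) * (deriv 𝓔 ((1 / 2) * radonT f r θ) * radonT h r θ) := by
    intro h s θ
    simp only [Aop, mul_assoc]
  have hTb := fun h hh hs => T_bound w hw2 ν _ (hG1 h hh hs).aestronglyMeasurable (hG10 h hs)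
  have hint := fun h hh hs => sec_int w hw2 ν _ (hG1 h hh hs) (hG10 h hs)
  have hAn : ∀ h : ℝ × ℝ → ℝ, MemLp h 2 volume → Function.support h ⊆ unitDisk →
      AEStronglyMeasurable (fun p : ℝ × ℝ => Aop w (deriv 𝓔) f h p.1 p.2) μ ∧
      eLpNorm (fun p : ℝ × ℝ => Aop w (deriv 𝓔) f h p.1 p.2) 2 μ ≤
        ENNReal.ofReal (2 * (eLpNorm w 2 volume).toReal * M * C * (μ univ ^ (1 / 4 : ℝ)).toReal) * eLpNorm h 2 volume := by
    intro h hh hs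
    obtain ⟨b1, b2⟩ := hTb h hh hs
    simp only [hA]
    refine ⟨b1.const_mul _, ?_⟩
    have c1 : eLpNorm (fun p : ℝ × ℝ => deriv 𝓔 ((1 / 2) * radonT f p.1 p.2) * radonT h p.1 p.2) 2 μ ≤
        ENNReal.ofReal M * (ENNReal.ofReal C * eLpNorm h 2 volume * μ univ ^ (1 / 4 : ℝ)) := by
      refine (eLpNorm_le_mul_eLpNorm_of_ae_le_mul (Filter.Eventually.of_forall (hG1b h)) 2).trans ?_
      gcongr
      refine (eLpNorm_le_eLpNorm_mul_rpow_measure_univ (q := 4) (by norm_num) (hR4 h hh hs).aestronglyMeasurable).trans ?_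
      have : (1 / (2 : ENNReal).toReal - 1 / (4 : ENNReal).toReal) = (1 / 4 : ℝ) := by norm_num
      rw [this]
      gcongr
      exact hRC h hh hs
    have c2 : eLpNorm (fun p : ℝ × ℝ => ∫ r : ℝ, w (r - p.1) * (deriv 𝓔 ((1 / 2) * radonT f r p.2) * radonT h r p.2)) 2 μ ≤
        2 * eLpNorm w 2 volume * eLpNorm (fun p : ℝ × ℝ => deriv 𝓔 ((1 / 2) * radonT f p.1 p.2) * radonT h p.1 p.2) 2 μ := by
      refine (ENNReal.pow_le_pow_left_iff two_ne_zero).1 (b2.trans ?_)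
      rw [mul_pow, mul_pow]
      gcongr
      norm_num
    have c3 : eLpNorm (fun p : ℝ × ℝ => (1 / 2) * ∫ r : ℝ, w (r - p.1) * (deriv 𝓔 ((1 / 2) * radonT f r p.2) * radonT h r p.2)) 2 μ ≤
        eLpNorm (fun p : ℝ × ℝ => ∫ r : ℝ, w (r - p.1) * (deriv 𝓔 ((1 / 2) * radonT f r p.2) * radonT h r p.2)) 2 μ := by
      refine eLpNorm_mono fun p => ?_
      rw [norm_mul]
      refine mul_le_of_le_one_left (norm_nonneg _) (by norm_num)
    refine c3.trans (c2.trans ?_)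
    have hμf : μ univ ^ (1 / 4 : ℝ) ≠ ⊤ := ENNReal.rpow_ne_top_of_nonneg (by norm_num) (measure_ne_top _ _)
    rw [ENNReal.ofReal_mul (by positivity), ENNReal.ofReal_mul (by positivity), ENNReal.ofReal_mul (by positivity),
      ENNReal.ofReal_mul (by positivity), ENNReal.ofReal_toReal hw2.eLpNorm_ne_top, ENNReal.ofReal_toReal hμf,
      ENNReal.ofReal_ofNat]
    calc _ ≤ 2 * eLpNorm w 2 volume * (ENNReal.ofReal M * (ENNReal.ofReal C * eLpNorm h 2 volume * μ univ ^ (1 / 4 : ℝ))) := by gcongr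
      _ = _ := by ring
  have hsnd : ∀ {P : ℝ → Prop}, (∀ᵐ θ ∂ν, P θ) → ∀ᵐ p : ℝ × ℝ ∂μ, P p.2 := fun hP =>
    Measure.quasiMeasurePreserving_snd.ae hP
  refine ⟨?_, ?_, ?_, ?_, ?_⟩
  · intro h hh hs
    exact ⟨(hAn h hh hs).1, (hAn h hh hs).2.trans_lt (ENNReal.mul_lt_top ENNReal.ofReal_lt_top hh.eLpNorm_lt_top)⟩
  · intro h₁ h₂ hh₁ hs₁ hh₂ hs₂
    filter_upwards [hsnd (hint h₁ hh₁ hs₁), hsnd (hint h₂ hh₂ hs₂)] with p i1 i2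
    rw [hA, hA, hA, ← mul_add, ← integral_add (i1 p.1) (i2 p.1)]
    congr 1
    refine integral_congr_ae ?_
    filter_upwards [radon_add h₁ h₂ (disk_integrable _ hh₁ hs₁) (disk_integrable _ hh₂ hs₂) p.2] with r hr
    rw [hr]
    ring
  · intro c h hh hs
    refine Filter.Eventually.of_forall fun p => ?_
    have hc : ∀ r θ, radonT (c • h) r θ = c * radonT h r θ := by
      intro r θ
      exact integral_const_mul c _
    rw [hA, hA, mul_left_comm, ← integral_const_mul c]
    congr 2
    funext r
    rw [hc]
    ring
  · exact ⟨_, by positivity, fun h hh hs => (hAn h hh hs).2⟩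
  · intro h hh hs
    have hfh : MemLp (f + h) 2 volume := hf.add hh
    have hfhs : Function.support (f + h) ⊆ unitDisk := (Function.support_add f h).trans (union_subset hfs hs)
    have hEm : ∀ g : ℝ × ℝ → ℝ, MemLp g 2 volume →
        AEStronglyMeasurable (fun p : ℝ × ℝ => 𝓔 ((1 / 2) * radonT g p.1 p.2)) volume := fun g hg =>
      hEc.comp_aestronglyMeasurable ((radon_aesm g hg.aestronglyMeasurable).const_mul (1 / 2))
    have hEi : ∀ g : ℝ × ℝ → ℝ, MemLp g 2 volume →
        ∀ᵐ θ ∂ν, ∀ s, Integrable (fun r => w (r - s) * 𝓔 ((1 / 2) * radonT g r θ)) := by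
      intro g hg
      filter_upwards [((hEm g hg).mono_ac hvν).prodMk_right] with θ hθ s
      exact (hw1.comp_sub_right s).mul_bdd (c := M) hθ (Filter.Eventually.of_forall fun r => (hM _).1)
    let G : ℝ × ℝ → ℝ := fun p => 𝓔 ((1 / 2) * radonT (f + h) p.1 p.2) - 𝓔 ((1 / 2) * radonT f p.1 p.2) -
      (1 / 2) * (deriv 𝓔 ((1 / 2) * radonT f p.1 p.2) * radonT h p.1 p.2)
    have hGm : AEStronglyMeasurable G volume :=
      ((hEm _ hfh).sub (hEm _ hf)).sub ((hG1m h hh).const_mul _)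
    have hG0 : ∀ r θ, r ∉ Icc (-1:ℝ) 1 → G (r, θ) = 0 := by
      intro r θ hr
      simp [G, radon_zero h hs θ r hr, radon_zero f hfs θ r hr, radon_zero _ hfhs θ r hr]
    obtain ⟨-, b2⟩ := T_bound w hw2 ν G (hGm.mono_measure hμv) hG0
    have hEq : eLpNorm (fun p : ℝ × ℝ =>
              Fop w 𝓔 (f + h) p.1 p.2 - Fop w 𝓔 f p.1 p.2 -
                Aop w (deriv 𝓔) f h p.1 p.2) 2 μ = eLpNorm (fun p : ℝ × ℝ => ∫ r, w (r - p.1) * G (r, p.2)) 2 μ := by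
      refine eLpNorm_congr_ae ?_
      filter_upwards [hsnd (hEi _ hfh), hsnd (hEi _ hf), hsnd (hint h hh hs)] with p i1 i2 i3
      rw [hA, Fop, Fop, ← integral_const_mul, ← integral_sub (i1 p.1) (i2 p.1)]
      refine (integral_sub ((i1 p.1).sub (i2 p.1)) ((i3 p.1).const_mul (1 / 2))).symm.trans ?_
      congr 1
      funext r
      simp only [G, Pi.sub_apply]
      ring
    rw [hEq]
    set K := (eLpNorm (deriv (deriv 𝓔)) ⊤ volume).toReal with hKdef
    have hGb : eLpNorm G 2 μ ≤ ENNReal.ofReal (K / 8) * (ENNReal.ofReal C * eLpNorm h 2 volume) ^ 2 := by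
      have hb : ∀ᵐ p ∂μ, ‖G p‖ ≤ K / 8 * ‖(‖radonT h p.1 p.2‖ ^ (2 : ℝ))‖ := by
        filter_upwards [(Measure.absolutelyContinuous_of_le hμv).ae_le
          (radon_add_prod f h (disk_integrable _ hf hfs) (disk_integrable _ hh hs))] with p hp
        have := taylor2 𝓔 h𝓔 K hK ((1 / 2) * radonT f p.1 p.2) ((1 / 2) * radonT h p.1 p.2)
        rw [Real.rpow_two, Real.norm_eq_abs, Real.norm_eq_abs, Real.norm_eq_abs, sq_abs, abs_of_nonneg (sq_nonneg (radonT h p.1 p.2))]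
        simp only [G, hp]
        convert this using 1
        · congr 1
          rw [mul_add]; ring
        · ring
      refine (eLpNorm_le_mul_eLpNorm_of_ae_le_mul hb 2).trans ?_
      gcongr
      rw [eLpNorm_norm_rpow _ (by norm_num)]
      have : (2 : ENNReal) * ENNReal.ofReal 2 = 4 := by
        rw [ENNReal.ofReal_ofNat]; norm_num
      rw [this, ENNReal.rpow_two]
      gcongr
      exact hRC h hh hs
    refine (ENNReal.pow_le_pow_left_iff two_ne_zero).1 (b2.trans ?_)
    have hK8 : ENNReal.ofReal (K / 8) = ENNReal.ofReal (1 / 8) * eLpNorm (deriv (deriv 𝓔)) ⊤ volume := by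
      rw [← ENNReal.ofReal_toReal hKfin, ← hKdef, ← ENNReal.ofReal_mul (by norm_num)]
      congr 1; ring
    have hc : 2 * ENNReal.ofReal (1 / 8) ^ 2 ≤ ENNReal.ofReal (1 / 4) ^ 2 := by
      rw [← ENNReal.ofReal_pow (by norm_num), ← ENNReal.ofReal_pow (by norm_num), ← ENNReal.ofReal_ofNat 2,
        ← ENNReal.ofReal_mul (by norm_num)]
      exact ENNReal.ofReal_le_ofReal (by norm_num)
    rw [hK8] at hGb
    set W := eLpNorm w 2 volume
    set Ke := eLpNorm (deriv (deriv 𝓔)) ⊤ volume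
    set H := eLpNorm h 2 volume
    calc _ ≤ 2 * W ^ 2 * (ENNReal.ofReal (1 / 8) * Ke * (ENNReal.ofReal C * H) ^ 2) ^ 2 := by gcongr
      _ = (2 * ENNReal.ofReal (1 / 8) ^ 2) * (W * Ke * ENNReal.ofReal C ^ 2 * H ^ 2) ^ 2 := by ring
      _ ≤ ENNReal.ofReal (1 / 4) ^ 2 * (W * Ke * ENNReal.ofReal C ^ 2 * H ^ 2) ^ 2 := by gcongr
      _ = _ := by ring
end

section
/- Let w ∈ L¹(ℝ) ∩ L²(ℝ) and let 𝓔 : ℝ → ℝ be twice continuously differentiable with 𝓔, 𝓔′, 𝓔″ bounded. For f, h ∈ L²(Ω_D) with Rh ∈ L⁴(Ω_S), letting (A(f)h)(s,θ) := ½·∫_ℝ w(r−s)·𝓔′(½·(Rf)(r,θ))·(Rh)(r,θ) dr, the following quadratic remainder estimate holds: ‖F(f+h) − F(f) − A(f)h‖_{L²(Ω_S)} ≤ ¼·‖w‖_{L²(ℝ)}·‖𝓔″‖_{L^∞(ℝ)}·‖Rh‖²_{L⁴(Ω_S)}. -/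
open MeasureTheory Real Set

lemma qre_taylor (E : ℝ → ℝ) (hE : ContDiff ℝ 2 E) (M : ℝ)
    (hM : ∀ x, |deriv (deriv E) x| ≤ M) (a b : ℝ) :
    |E (a + b) - E a - deriv E a * b| ≤ M / 2 * b ^ 2 := by
  have hE1 : Differentiable ℝ E := hE.differentiable (by norm_num)
  have hE2 : Differentiable ℝ (deriv E) := by
    have : ContDiff ℝ 1 (deriv E) := hE.deriv' (n := 1)
    exact this.differentiable (by norm_num)
  have hlip : ∀ x y : ℝ, |deriv E y - deriv E x| ≤ M * |y - x| := fun x y => by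
    have := (convex_univ (𝕜 := ℝ) (E := ℝ)).norm_image_sub_le_of_norm_deriv_le (f := deriv E) (C := M)
      (fun z _ => hE2 z) (fun z _ => hM z) (mem_univ x) (mem_univ y)
    simpa using this
  have hd : ∀ t : ℝ, HasDerivAt (fun t => E (a + t * b) - E a - deriv E a * (t * b))
      (deriv E (a + t * b) * b - deriv E a * b) t := fun t => by
    have h1 : HasDerivAt (fun t : ℝ => t * b) b t := by
      simpa using (hasDerivAt_id t).mul_const b
    have h2 : HasDerivAt (fun t : ℝ => a + t * b) b t := h1.const_add a
    have h3 : HasDerivAt (fun t : ℝ => E (a + t * b)) (deriv E (a + t * b) * b) t :=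
      HasDerivAt.comp t (hE1 (a + t * b)).hasDerivAt h2
    exact (h3.sub_const _).sub (h1.const_mul _)
  have hB : ∀ t : ℝ, HasDerivAt (fun t : ℝ => M / 2 * b ^ 2 * t ^ 2) (M * b ^ 2 * t) t := fun t => by
    have := (hasDerivAt_pow 2 t).const_mul (M / 2 * b ^ 2)
    refine this.congr_deriv ?_
    norm_num
    ring
  have key := image_norm_le_of_norm_deriv_right_le_deriv_boundary (a := 0) (b := 1)
    (f := fun t => E (a + t * b) - E a - deriv E a * (t * b))
    (f' := fun t => deriv E (a + t * b) * b - deriv E a * b)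
    (B := fun t : ℝ => M / 2 * b ^ 2 * t ^ 2) (B' := fun t => M * b ^ 2 * t)
    (fun t _ => (hd t).continuousAt.continuousWithinAt)
    (fun t _ => (hd t).hasDerivWithinAt) (by simp) hB
    (fun t ht => by
      have h1 := hlip a (a + t * b)
      have e : deriv E (a + t * b) * b - deriv E a * b = (deriv E (a + t * b) - deriv E a) * b := by
        ring
      rw [e, Real.norm_eq_abs, abs_mul]
      calc _ ≤ M * |a + t * b - a| * |b| := mul_le_mul_of_nonneg_right h1 (abs_nonneg _)
        _ = M * b ^ 2 * t := by
          rw [add_sub_cancel_left, abs_mul, abs_of_nonneg ht.1, ← sq_abs b]; ring)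
  have := key (x := 1) (by simp)
  simpa using this

lemma qre_rot (θ : ℝ) : MeasurePreserving
    (fun p : ℝ × ℝ => (p.1 * Real.cos θ - p.2 * Real.sin θ, p.1 * Real.sin θ + p.2 * Real.cos θ))
    volume volume := by
  set L := Matrix.toLin (Module.Basis.finTwoProd ℝ) (Module.Basis.finTwoProd ℝ)
    !![Real.cos θ, -Real.sin θ; Real.sin θ, Real.cos θ] with hL
  have hdet : LinearMap.det L = 1 := by
    rw [hL, LinearMap.det_toLin, Matrix.det_fin_two_of]
    nlinarith [Real.sin_sq_add_cos_sq θ]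
  have e : (fun p : ℝ × ℝ => (p.1 * Real.cos θ - p.2 * Real.sin θ,
      p.1 * Real.sin θ + p.2 * Real.cos θ)) = L := by
    funext p
    rw [hL, Matrix.toLin_finTwoProd_apply]
    ext <;> simp <;> ring
  rw [e]
  refine ⟨L.continuous_of_finiteDimensional.measurable, ?_⟩
  rw [Measure.map_linearMap_addHaar_eq_smul_addHaar volume (by rw [hdet]; norm_num), hdet]
  simp

lemma qre_integrable (f : ℝ × ℝ → ℝ) (hf : MemLp f 2 volume)
    (hs : Function.support f ⊆ unitDisk) : Integrable f := by
  have hfin : volume unitDisk < ⊤ := by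
    have : unitDisk ⊆ Icc (-1 : ℝ) 1 ×ˢ Icc (-1 : ℝ) 1 := by
      rintro ⟨x, y⟩ h
      simp only [unitDisk, mem_ofPred_eq] at h
      simp only [mem_prod, mem_Icc]
      refine ⟨⟨?_, ?_⟩, ⟨?_, ?_⟩⟩ <;> nlinarith [sq_nonneg x, sq_nonneg y]
    exact (measure_mono this).trans_lt ((isCompact_Icc.prod isCompact_Icc).measure_lt_top)
  have : IsFiniteMeasure ((volume : Measure (ℝ × ℝ)).restrict unitDisk) :=
    isFiniteMeasure_restrict.mpr hfin.ne
  have h1 : IntegrableOn f unitDisk := (hf.restrict unitDisk).integrable (by norm_num)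
  exact (integrableOn_iff_integrable_of_support_subset hs).1 h1

lemma qre_line (f : ℝ × ℝ → ℝ) (hf : Integrable f) (θ : ℝ) :
    Integrable (fun p : ℝ × ℝ => f (p.1 * Real.cos θ - p.2 * Real.sin θ,
      p.1 * Real.sin θ + p.2 * Real.cos θ)) :=
  (qre_rot θ).integrable_comp_of_integrable hf

lemma qre_meas (f : ℝ × ℝ → ℝ) (hf : Integrable f) (θ : ℝ) :
    AEStronglyMeasurable (fun r => radonT f r θ) volume :=
  (qre_line f hf θ).aestronglyMeasurable.integral_prod_right'

lemma qre_add (f h : ℝ × ℝ → ℝ) (hf : Integrable f) (hh : Integrable h) (θ : ℝ) :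
    ∀ᵐ r, radonT (f + h) r θ = radonT f r θ + radonT h r θ := by
  filter_upwards [(qre_line f hf θ).prod_right_ae, (qre_line h hh θ).prod_right_ae] with r h1 h2
  exact integral_add h1 h2

lemma qre_zero (h : ℝ × ℝ → ℝ) (hs : Function.support h ⊆ unitDisk) (r θ : ℝ)
    (hr : r ∉ Icc (-1 : ℝ) 1) : radonT h r θ = 0 := by
  unfold radonT
  rw [← integral_zero ℝ ℝ (μ := volume)]
  congr 1
  funext σ
  by_contra hne
  have := hs hne
  simp only [unitDisk, mem_ofPred_eq] at this
  apply hr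
  have e : r ^ 2 + σ ^ 2 ≤ 1 := by
    have := Real.sin_sq_add_cos_sq θ
    nlinarith
  constructor <;> nlinarith [sq_nonneg σ]

lemma qre_sup (g : ℝ → ℝ) (hg : Continuous g) (M : ℝ) (hM : ∀ x, |g x| ≤ M) (x : ℝ) :
    |g x| ≤ (eLpNorm g ⊤ volume).toReal ∧ eLpNorm g ⊤ volume ≠ ⊤ := by
  have hfin : eLpNorm g ⊤ volume ≠ ⊤ :=
    (memLp_top_of_bound hg.aestronglyMeasurable M (ae_of_all _ hM)).eLpNorm_ne_top
  refine ⟨?_, hfin⟩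
  have hae : ∀ᵐ x, |g x| ≤ (eLpNorm g ⊤ volume).toReal := by
    filter_upwards [enorm_ae_le_eLpNormEssSup g volume] with x hx
    rw [← eLpNorm_exponent_top] at hx
    have := ENNReal.toReal_mono hfin hx
    simpa using this
  have hd := Measure.dense_of_ae hae
  have hc : IsClosed {x | |g x| ≤ (eLpNorm g ⊤ volume).toReal} :=
    isClosed_le hg.abs continuous_const
  have := hc.closure_eq
  rw [hd.closure_eq] at this
  have hx : x ∈ {x | |g x| ≤ (eLpNorm g ⊤ volume).toReal} := by
    rw [← this]; exact mem_univ x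
  exact hx

lemma qre_pointwise (w 𝓔 : ℝ → ℝ)
    (hw1 : Integrable w) (hw2 : MemLp w 2 volume)
    (h𝓔 : ContDiff ℝ 2 𝓔)
    (h𝓔b : ∃ M : ℝ, ∀ x : ℝ, |𝓔 x| ≤ M ∧ |deriv 𝓔 x| ≤ M ∧ |deriv (deriv 𝓔) x| ≤ M)
    (f h : ℝ × ℝ → ℝ) (hf : Integrable f) (hh : Integrable h)
    (hhsupp : Function.support h ⊆ unitDisk) (θ s : ℝ)
    (hfin : ∫⁻ r in Icc (-1 : ℝ) 1, ‖radonT h r θ‖ₑ ^ 4 < ⊤) :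
    ‖Fop w 𝓔 (f + h) s θ - Fop w 𝓔 f s θ - Aop w (deriv 𝓔) f h s θ‖ₑ ≤
      ENNReal.ofReal (1 / 8) * eLpNorm (deriv (deriv 𝓔)) ⊤ volume * eLpNorm w 2 volume *
        (∫⁻ r in Icc (-1 : ℝ) 1, ‖radonT h r θ‖ₑ ^ 4) ^ (1 / 2 : ℝ) := by
  obtain ⟨M, hM⟩ := h𝓔b
  have hc1 : ContDiff ℝ 1 (deriv 𝓔) := h𝓔.deriv' (n := 1)
  have hc2 : Continuous (deriv (deriv 𝓔)) := hc1.continuous_deriv (by norm_num)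
  have hsup := qre_sup _ hc2 M (fun x => (hM x).2.2)
  set N := eLpNorm (deriv (deriv 𝓔)) ⊤ volume with hN
  have hT := qre_taylor 𝓔 h𝓔 N.toReal (fun x => (hsup x).1)
  have hNt : N ≠ ⊤ := (hsup 0).2
  have mh := qre_meas h hh θ
  have mf := qre_meas f hf θ
  have mfh := qre_meas (f + h) (hf.add hh) θ
  have hws : MeasurePreserving (fun r : ℝ => r - s) volume volume := measurePreserving_sub_right _ s
  have iw1 : Integrable (fun r => w (r - s)) := hw1.comp_sub_right s
  have iw2 : MemLp (fun r => w (r - s)) 2 volume := hw2.comp_measurePreserving hws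
  have hR2 : MemLp (fun r => radonT h r θ) 2 volume := by
    have h4 : MemLp (fun r => radonT h r θ) 4 (volume.restrict (Icc (-1 : ℝ) 1)) := by
      refine ⟨mh.restrict, ?_⟩
      rw [eLpNorm_lt_top_iff_lintegral_rpow_enorm_lt_top (by norm_num) (by norm_num)]
      simpa using hfin
    have h2 : MemLp (fun r => radonT h r θ) 2 (volume.restrict (Icc (-1 : ℝ) 1)) :=
      h4.mono_exponent (by norm_num)
    rw [← memLp_indicator_iff_restrict measurableSet_Icc] at h2
    convert h2 using 1
    funext r
    by_cases hr : r ∈ Icc (-1 : ℝ) 1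
    · rw [indicator_of_mem hr]
    · rw [indicator_of_notMem hr, qre_zero h hhsupp r θ hr]
  have I1 : ∀ g : ℝ → ℝ, AEStronglyMeasurable g volume →
      Integrable (fun r => w (r - s) * 𝓔 ((1 / 2) * g r)) := fun g hg =>
    iw1.mul_bdd (c := M) (h𝓔.continuous.comp_aestronglyMeasurable (hg.const_mul _))
      (ae_of_all _ fun r => (hM _).1)
  have I2 : Integrable (fun r => w (r - s) * deriv 𝓔 ((1 / 2) * radonT f r θ) * radonT h r θ) := by
    have : Integrable (fun r => w (r - s) * radonT h r θ) := iw2.integrable_mul hR2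
    have := this.mul_bdd (c := M) (g := fun r => deriv 𝓔 ((1 / 2) * radonT f r θ))
      (hc1.continuous.comp_aestronglyMeasurable (mf.const_mul _))
      (ae_of_all _ fun r => (hM _).2.1)
    exact this.congr (ae_of_all _ fun r => by ring)
  have hG : Fop w 𝓔 (f + h) s θ - Fop w 𝓔 f s θ - Aop w (deriv 𝓔) f h s θ =
      ∫ r, (w (r - s) * 𝓔 ((1 / 2) * radonT (f + h) r θ) - w (r - s) * 𝓔 ((1 / 2) * radonT f r θ)
        - (1 / 2) * (w (r - s) * deriv 𝓔 ((1 / 2) * radonT f r θ) * radonT h r θ)) := by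
    unfold Fop Aop
    have I12 : Integrable (fun r => w (r - s) * 𝓔 ((1 / 2) * radonT (f + h) r θ)
        - w (r - s) * 𝓔 ((1 / 2) * radonT f r θ)) := (I1 _ mfh).sub (I1 _ mf)
    rw [integral_sub I12 (I2.const_mul _), integral_sub (I1 _ mfh) (I1 _ mf),
      integral_const_mul]
  rw [hG]
  have hfull : ∫⁻ r in Icc (-1 : ℝ) 1, ‖radonT h r θ‖ₑ ^ 4 = ∫⁻ r, ‖radonT h r θ‖ₑ ^ 4 := by
    rw [← lintegral_indicator measurableSet_Icc]
    congr 1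
    funext r
    by_cases hr : r ∈ Icc (-1 : ℝ) 1
    · rw [indicator_of_mem hr]
    · rw [indicator_of_notMem hr, qre_zero h hhsupp r θ hr]; simp
  rw [hfull]
  calc _ ≤ ∫⁻ r, ‖w (r - s) * 𝓔 ((1 / 2) * radonT (f + h) r θ)
        - w (r - s) * 𝓔 ((1 / 2) * radonT f r θ)
        - (1 / 2) * (w (r - s) * deriv 𝓔 ((1 / 2) * radonT f r θ) * radonT h r θ)‖ₑ :=
        enorm_integral_le_lintegral_enorm _
    _ ≤ ∫⁻ r, (ENNReal.ofReal (1 / 8) * N) * (‖w (r - s)‖ₑ * ‖radonT h r θ‖ₑ ^ 2) := by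
        apply lintegral_mono_ae
        filter_upwards [qre_add f h hf hh θ] with r hr
        rw [hr]
        have h1 := hT ((1 / 2) * radonT f r θ) ((1 / 2) * radonT h r θ)
        have e1 : w (r - s) * 𝓔 ((1 / 2) * (radonT f r θ + radonT h r θ))
            - w (r - s) * 𝓔 ((1 / 2) * radonT f r θ)
            - (1 / 2) * (w (r - s) * deriv 𝓔 ((1 / 2) * radonT f r θ) * radonT h r θ)
            = w (r - s) * (𝓔 ((1 / 2) * radonT f r θ + (1 / 2) * radonT h r θ)
              - 𝓔 ((1 / 2) * radonT f r θ)
              - deriv 𝓔 ((1 / 2) * radonT f r θ) * ((1 / 2) * radonT h r θ)) := by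
          rw [← mul_add]; ring
        rw [e1, enorm_mul]
        have h2 : ‖𝓔 ((1 / 2) * radonT f r θ + (1 / 2) * radonT h r θ)
              - 𝓔 ((1 / 2) * radonT f r θ)
              - deriv 𝓔 ((1 / 2) * radonT f r θ) * ((1 / 2) * radonT h r θ)‖ₑ ≤
              ENNReal.ofReal (1 / 8) * N * ‖radonT h r θ‖ₑ ^ 2 := by
          rw [← ofReal_norm, ← ofReal_norm, ← ENNReal.ofReal_toReal hNt,
            ← ENNReal.ofReal_mul (by norm_num), ← ENNReal.ofReal_pow (norm_nonneg _),
            ← ENNReal.ofReal_mul (by positivity)]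
          apply ENNReal.ofReal_le_ofReal
          rw [Real.norm_eq_abs, Real.norm_eq_abs, sq_abs]
          refine h1.trans (le_of_eq ?_)
          ring
        calc _ ≤ ‖w (r - s)‖ₑ * (ENNReal.ofReal (1 / 8) * N * ‖radonT h r θ‖ₑ ^ 2) := by gcongr
          _ = _ := by ring
    _ = (ENNReal.ofReal (1 / 8) * N) * ∫⁻ r, ‖w (r - s)‖ₑ * ‖radonT h r θ‖ₑ ^ 2 :=
        lintegral_const_mul' _ _ (ENNReal.mul_ne_top (by simp) hNt)
    _ ≤ (ENNReal.ofReal (1 / 8) * N) * (eLpNorm w 2 volume *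
          (∫⁻ r, ‖radonT h r θ‖ₑ ^ 4) ^ (1 / 2 : ℝ)) := by
        gcongr
        have hol := ENNReal.lintegral_mul_le_Lp_mul_Lq volume Real.HolderConjugate.two_two
          iw1.aestronglyMeasurable.enorm (mh.enorm.pow_const 2)
        have e2 : eLpNorm w 2 volume = (∫⁻ r, ‖w (r - s)‖ₑ ^ (2 : ℝ)) ^ (1 / 2 : ℝ) := by
          rw [← eLpNorm_comp_measurePreserving hw2.1 hws,
            eLpNorm_eq_lintegral_rpow_enorm_toReal (by norm_num) (by norm_num)]
          simp
        rw [e2]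
        refine hol.trans (le_of_eq ?_)
        congr 3
        funext r
        rw [ENNReal.rpow_two, ← pow_mul]
    _ = _ := by ring

/-- For `w ∈ L¹(ℝ) ∩ L²(ℝ)` and `𝓔` twice continuously differentiable
with `𝓔, 𝓔', 𝓔''` bounded, and `f, h ∈ L²(Ω_D)` with `Rh ∈ L⁴(Ω_S)`, the quadratic
remainder estimate holds:
`‖F(f+h) − F(f) − A(f)h‖_{L²(Ω_S)} ≤ ¼·‖w‖_{L²}·‖𝓔''‖_{L^∞}·‖Rh‖²_{L⁴(Ω_S)}`. -/
theorem quadratic_remainder_estimate (w 𝓔 : ℝ → ℝ)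
    (hw1 : Integrable w) (hw2 : MemLp w 2 volume)
    (h𝓔 : ContDiff ℝ 2 𝓔)
    (h𝓔b : ∃ M : ℝ, ∀ x : ℝ, |𝓔 x| ≤ M ∧ |deriv 𝓔 x| ≤ M ∧ |deriv (deriv 𝓔) x| ≤ M)
    (f h : ℝ × ℝ → ℝ)
    (hf : MemLp f 2 volume) (hfsupp : Function.support f ⊆ unitDisk)
    (hh : MemLp h 2 volume) (hhsupp : Function.support h ⊆ unitDisk)
    (hRh : MemLp (fun p : ℝ × ℝ => radonT h p.1 p.2) 4 (volume.restrict sinoDom)) :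
    eLpNorm
        (fun p : ℝ × ℝ =>
          Fop w 𝓔 (f + h) p.1 p.2 - Fop w 𝓔 f p.1 p.2 - Aop w (deriv 𝓔) f h p.1 p.2) 2
        (volume.restrict sinoDom) ≤
      ENNReal.ofReal (1 / 4) * eLpNorm w 2 volume * eLpNorm (deriv (deriv 𝓔)) ⊤ volume *
        (eLpNorm (fun p : ℝ × ℝ => radonT h p.1 p.2) 4 (volume.restrict sinoDom)) ^ 2 := by
  have hfi := qre_integrable f hf hfsupp
  have hhi := qre_integrable h hh hhsupp
  have hmu : (volume : Measure (ℝ × ℝ)).restrict sinoDom =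
      (volume.restrict (Icc (-1 : ℝ) 1)).prod (volume.restrict (Ico (0 : ℝ) (2 * π))) := by
    rw [Measure.prod_restrict]; rfl
  set C := ENNReal.ofReal (1 / 8) * eLpNorm (deriv (deriv 𝓔)) ⊤ volume * eLpNorm w 2 volume with hC
  set K : ℝ → ENNReal := fun θ => ∫⁻ r in Icc (-1 : ℝ) 1, ‖radonT h r θ‖ₑ ^ 4 with hK
  have hm4 : AEMeasurable (fun p : ℝ × ℝ => ‖radonT h p.1 p.2‖ₑ ^ 4)
      ((volume.restrict (Icc (-1 : ℝ) 1)).prod (volume.restrict (Ico (0 : ℝ) (2 * π)))) := by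
    rw [← hmu]
    exact hRh.1.enorm.pow_const 4
  have hKm : AEMeasurable K (volume.restrict (Ico (0 : ℝ) (2 * π))) := hm4.lintegral_prod_left'
  have hKint : ∫⁻ p in sinoDom, ‖radonT h p.1 p.2‖ₑ ^ 4 =
      ∫⁻ θ in Ico (0 : ℝ) (2 * π), K θ := by
    rw [hmu, lintegral_prod_symm _ hm4]
  have hn4 : (eLpNorm (fun p : ℝ × ℝ => radonT h p.1 p.2) 4 (volume.restrict sinoDom)) ^ 2 =
      (∫⁻ θ in Ico (0 : ℝ) (2 * π), K θ) ^ (1 / 2 : ℝ) := by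
    rw [← hKint, eLpNorm_eq_lintegral_rpow_enorm_toReal (by norm_num) (by norm_num),
      ← ENNReal.rpow_two, ← ENNReal.rpow_mul]
    simp only [ENNReal.toReal_ofNat]
    congr 1
    · congr 1
      funext p
      exact_mod_cast ENNReal.rpow_natCast _ 4
    · norm_num
  have hKfin : ∫⁻ θ in Ico (0 : ℝ) (2 * π), K θ ≠ ⊤ := by
    have h1 : (eLpNorm (fun p : ℝ × ℝ => radonT h p.1 p.2) 4 (volume.restrict sinoDom)) ^ 2 ≠ ⊤ :=
      ENNReal.pow_ne_top hRh.2.ne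
    rw [hn4] at h1
    intro htop
    rw [htop] at h1
    simp at h1
  have hae : ∀ᵐ θ ∂(volume.restrict (Ico (0 : ℝ) (2 * π))), K θ < ⊤ := ae_lt_top' hKm hKfin
  have hae2 : ∀ᵐ p ∂((volume.restrict (Icc (-1 : ℝ) 1)).prod
      (volume.restrict (Ico (0 : ℝ) (2 * π)))), K p.2 < ⊤ :=
    Measure.quasiMeasurePreserving_snd.ae hae
  rw [hn4, eLpNorm_eq_lintegral_rpow_enorm_toReal (by norm_num) (by norm_num), hmu]
  simp only [ENNReal.toReal_ofNat]
  have hmain : ∫⁻ p, ‖Fop w 𝓔 (f + h) p.1 p.2 - Fop w 𝓔 f p.1 p.2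
        - Aop w (deriv 𝓔) f h p.1 p.2‖ₑ ^ (2 : ℝ) ∂((volume.restrict (Icc (-1 : ℝ) 1)).prod
      (volume.restrict (Ico (0 : ℝ) (2 * π)))) ≤
      (2 * C) ^ (2 : ℝ) * ∫⁻ θ in Ico (0 : ℝ) (2 * π), K θ := by
    calc _ ≤ ∫⁻ p, C ^ (2 : ℝ) * K p.2 ∂((volume.restrict (Icc (-1 : ℝ) 1)).prod
          (volume.restrict (Ico (0 : ℝ) (2 * π)))) := by
          apply lintegral_mono_ae
          filter_upwards [hae2] with p hp
          have := qre_pointwise w 𝓔 hw1 hw2 h𝓔 h𝓔b f h hfi hhi hhsupp p.2 p.1 hp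
          refine (ENNReal.rpow_le_rpow this (by norm_num : (0 : ℝ) ≤ 2)).trans (le_of_eq ?_)
          rw [ENNReal.mul_rpow_of_nonneg _ _ (by norm_num), ← ENNReal.rpow_mul]
          norm_num [hK, hC]
      _ = ∫⁻ θ in Ico (0 : ℝ) (2 * π), ∫⁻ _ in Icc (-1 : ℝ) 1, C ^ (2 : ℝ) * K θ := by
          rw [lintegral_prod_symm]
          exact (hKm.comp_quasiMeasurePreserving
            Measure.quasiMeasurePreserving_snd).const_mul _
      _ = ∫⁻ θ in Ico (0 : ℝ) (2 * π), (2 * C ^ (2 : ℝ)) * K θ := by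
          congr 1
          funext θ
          rw [lintegral_const, Measure.restrict_apply MeasurableSet.univ, univ_inter,
            Real.volume_Icc]
          norm_num
          ring
      _ = (2 * C ^ (2 : ℝ)) * ∫⁻ θ in Ico (0 : ℝ) (2 * π), K θ := lintegral_const_mul'' _ hKm
      _ ≤ _ := by
          rw [ENNReal.mul_rpow_of_nonneg 2 C (by norm_num)]
          have h24 : (2 : ENNReal) ≤ 2 ^ (2 : ℝ) := by
            rw [ENNReal.rpow_two]
            norm_num
          exact mul_le_mul' (mul_le_mul' h24 le_rfl) le_rfl
  refine (ENNReal.rpow_le_rpow hmain (by norm_num : (0 : ℝ) ≤ 1 / 2)).trans (le_of_eq ?_)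
  rw [ENNReal.mul_rpow_of_nonneg _ _ (by norm_num), ← ENNReal.rpow_mul]
  have h14 : ENNReal.ofReal (1 / 4) = 2 * ENNReal.ofReal (1 / 8) := by
    rw [show (1 / 4 : ℝ) = 2 * (1 / 8) by norm_num, ENNReal.ofReal_mul (by norm_num)]
    simp
  rw [h14, hC, show (2 : ℝ) * (1 / 2) = 1 by norm_num, ENNReal.rpow_one]
  ring
end
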